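/- Let m ≤ n be positive integers and let Ψ = Ψ_{m,n} : ℝ² → ℂ² be the Lee–Wang map. Then Ψ is Lagrangian: for all (s,t), the Kähler form vanishes on the coordinate tangent vectors, i.e. ⟨i·∂_sΨ(s,t), ∂_tΨ(s,t)⟩ = 0. -/

import Mathlib

/-- Real inner product on ℂ ≅ ℝ²: ⟨u,v⟩ = Re(u · conj v). -/
noncomputable def rinner (u v : ℂ) : ℝ := u.re * v.re + u.im * v.im

/-- Real inner product on ℂ² ≅ ℝ⁴. -/
noncomputable def rinner2 (u v : ℂ × ℂ) : ℝ := rinner u.1 v.1 + rinner u.2 v.2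

/-- Squared Euclidean norm on ℂ² ≅ ℝ⁴. -/
noncomputable def norm2 (v : ℂ × ℂ) : ℝ := ‖v.1‖ ^ 2 + ‖v.2‖ ^ 2

/-- Partial derivative of F : ℝ² → ℂ² in the first variable. -/
noncomputable def pd1 (F : ℝ → ℝ → ℂ × ℂ) (a b : ℝ) : ℂ × ℂ := deriv (fun x => F x b) a

/-- Partial derivative of F : ℝ² → ℂ² in the second variable. -/
noncomputable def pd2 (F : ℝ → ℝ → ℂ × ℂ) (a b : ℝ) : ℂ × ℂ := deriv (fun y => F a y) b

/-- The Lee–Wang map Ψ_{m,n}(s,t) = √(m+n)((1/√n)cos s e^{i√(n/m)t}, (1/√m)sin s e^{i√(m/n)t}). -/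
noncomputable def leeWang (m n : ℕ) (s t : ℝ) : ℂ × ℂ :=
  ((Real.sqrt (m + n) * (1 / Real.sqrt n) * Real.cos s : ℝ)
      * Complex.exp (Complex.I * (Real.sqrt ((n : ℝ) / m) * t)),
   (Real.sqrt (m + n) * (1 / Real.sqrt m) * Real.sin s : ℝ)
      * Complex.exp (Complex.I * (Real.sqrt ((m : ℝ) / n) * t)))

/-- Componentwise multiplication by i on ℂ² (the complex structure J). -/
noncomputable def Jmul (v : ℂ × ℂ) : ℂ × ℂ := (Complex.I * v.1, Complex.I * v.2)

theorem hasDeriv_real_mul_const (f : ℝ → ℝ) (df x c : ℝ) (z : ℂ) (hf : HasDerivAt f df x) :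
    HasDerivAt (fun x => ((c * f x : ℝ) : ℂ) * z) (((c * df : ℝ) : ℂ) * z) x :=
  ((hf.const_mul c).ofReal_comp).mul_const z

theorem hasDeriv_exp_phase (c a t : ℝ) :
    HasDerivAt (fun y : ℝ => (c : ℂ) * Complex.exp (Complex.I * ((a : ℂ) * (y : ℂ))))
      ((c : ℂ) * (Complex.exp (Complex.I * ((a : ℂ) * (t : ℂ))) * (Complex.I * a))) t := by
  have h : HasDerivAt (fun y : ℝ => Complex.I * ((a : ℂ) * (y : ℂ))) (Complex.I * a) t := by
    have h0 : HasDerivAt (fun y : ℝ => (y : ℂ)) 1 t := (hasDerivAt_id t).ofReal_comp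
    simpa using (h0.const_mul (a : ℂ)).const_mul Complex.I
  exact h.cexp.const_mul _

theorem rinner_phase (p q a t : ℝ) :
    rinner (Complex.I * ((p : ℂ) * Complex.exp (Complex.I * ((a : ℂ) * (t : ℂ)))))
      ((q : ℂ) * (Complex.exp (Complex.I * ((a : ℂ) * (t : ℂ))) * (Complex.I * a)))
      = p * q * a := by
  have h : Complex.I * ((a : ℂ) * (t : ℂ)) = ((a * t : ℝ) : ℂ) * Complex.I := by
    push_cast; ring
  have hre : (Complex.exp (Complex.I * ((a : ℂ) * (t : ℂ)))).re = Real.cos (a * t) := by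
    rw [h, Complex.exp_ofReal_mul_I_re]
  have him : (Complex.exp (Complex.I * ((a : ℂ) * (t : ℂ)))).im = Real.sin (a * t) := by
    rw [h, Complex.exp_ofReal_mul_I_im]
  generalize Complex.exp (Complex.I * ((a : ℂ) * (t : ℂ))) = e at *
  simp only [rinner, Complex.mul_re, Complex.mul_im, Complex.I_re, Complex.I_im,
    Complex.ofReal_re, Complex.ofReal_im, hre, him]
  linear_combination p * q * a * Real.sin_sq_add_cos_sq (a * t)

/-- The Lee–Wang map is Lagrangian: the Kähler form ω(u,v) = ⟨iu, v⟩ vanishes on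
the coordinate tangent vectors. -/
theorem lee_wang_lagrangian (m n : ℕ) (hm : 0 < m) (hmn : m ≤ n) :
    ∀ s t : ℝ,
      rinner2 (Jmul (pd1 (leeWang m n) s t)) (pd2 (leeWang m n) s t) = 0 := by
  intro s t
  have h1 : pd1 (leeWang m n) s t = _ :=
    ((hasDeriv_real_mul_const _ _ s (Real.sqrt (m + n) * (1 / Real.sqrt n))
      (Complex.exp (Complex.I * (Real.sqrt ((n : ℝ) / m) * t))) (Real.hasDerivAt_cos s)).prodMk
    (hasDeriv_real_mul_const _ _ s (Real.sqrt (m + n) * (1 / Real.sqrt m))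
      (Complex.exp (Complex.I * (Real.sqrt ((m : ℝ) / n) * t))) (Real.hasDerivAt_sin s))).deriv
  have h2 : pd2 (leeWang m n) s t = _ :=
    ((hasDeriv_exp_phase (Real.sqrt (m + n) * (1 / Real.sqrt n) * Real.cos s)
      (Real.sqrt ((n : ℝ) / m)) t).prodMk
    (hasDeriv_exp_phase (Real.sqrt (m + n) * (1 / Real.sqrt m) * Real.sin s)
      (Real.sqrt ((m : ℝ) / n)) t)).deriv
  rw [h1, h2]
  simp only [rinner2, Jmul, rinner_phase]
  have hmR : (0 : ℝ) < m := by exact_mod_cast hm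
  have hnR : (0 : ℝ) < n := by exact_mod_cast lt_of_lt_of_le hm hmn
  rw [Real.sqrt_div hnR.le, Real.sqrt_div hmR.le]
  have hx := Real.sqrt_pos.2 hmR
  have hy := Real.sqrt_pos.2 hnR
  field_simp
  ring
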